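/- Let 1 ≤ i ≤ n-1. If F' is a complete flag in ℂ^n whose m-th subspace agrees with the m-th subspace of F_i for every m ≠ i, then exactly one of the following holds: F' = F_i; F' = F_{i+1}; F' lies in the K-orbit of F_{i,i+1}. Moreover each of the three possibilities occurs for some such F'. (This realizes set-theoretically that α_i is noncompact for Q_i = K·F_i and that m(s_{α_i})*Q_i = Q_{i,i+1}.) -/

import Mathlib

open Module Submodule

noncomputable section

/-- `stdVec n m` is the `m`-th standard basis vector of `ℂ^n` (1-indexed); `0` out of range. -/
def stdVec (n m : ℕ) : Fin n → ℂ :=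
  if h : 1 ≤ m ∧ m ≤ n then Pi.single (⟨m - 1, by omega⟩ : Fin n) 1 else 0

/-- `stdSub n k` is the subspace `U_k = span(e_1, …, e_k)` of `ℂ^n`. -/
def stdSub (n k : ℕ) : Submodule ℂ (Fin n → ℂ) :=
  span ℂ (stdVec n '' Set.Icc 1 k)

/-- The action of an invertible linear map of `ℂ^n` on a chain of subspaces. -/
def actFlag (n : ℕ) (g : (Fin n → ℂ) ≃ₗ[ℂ] (Fin n → ℂ))
    (V : ℕ → Submodule ℂ (Fin n → ℂ)) (k : ℕ) : Submodule ℂ (Fin n → ℂ) :=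
  Submodule.map g.toLinearMap (V k)

/-- The orbit of the chain `V` under a set `B` of invertible linear maps. -/
def orbitOf (n : ℕ) (B : Set ((Fin n → ℂ) ≃ₗ[ℂ] (Fin n → ℂ)))
    (V : ℕ → Submodule ℂ (Fin n → ℂ)) : Set (ℕ → Submodule ℂ (Fin n → ℂ)) :=
  {V' | ∃ b ∈ B, actFlag n b V = V'}

/-- A complete flag in `ℂ^n`: `V k` is the `k`-dimensional member for `0 ≤ k ≤ n`;
values above `n` are pinned so that two flags are equal iff they agree in degrees `≤ n`. -/
def IsCompleteFlag (n : ℕ) (V : ℕ → Submodule ℂ (Fin n → ℂ)) : Prop :=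
  (∀ k, k ≤ n → finrank ℂ ↥(V k) = k) ∧ (∀ k, V k ≤ V (k + 1)) ∧ (∀ k, n ≤ k → V k = V n)

/-- The complete flag `(v 1 ⊂ v 2 ⊂ ⋯ ⊂ v n)` spanned by the vectors `v 1, …, v n`. -/
def flagOf (n : ℕ) (v : ℕ → Fin n → ℂ) (k : ℕ) : Submodule ℂ (Fin n → ℂ) :=
  span ℂ (v '' Set.Icc 1 (min k n))

/-- `K = {g ∈ GL(n,ℂ) : g e_n = e_n, g U_{n-1} = U_{n-1}}`, a copy of `GL(n-1,ℂ)`. -/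
def Ksub (n : ℕ) : Set ((Fin n → ℂ) ≃ₗ[ℂ] (Fin n → ℂ)) :=
  {g | g (stdVec n n) = stdVec n n ∧
       Submodule.map g.toLinearMap (stdSub n (n - 1)) = stdSub n (n - 1)}

/-- `V'` lies in the `K`-orbit of `V`. -/
def InKOrbit (n : ℕ) (V V' : ℕ → Submodule ℂ (Fin n → ℂ)) : Prop :=
  ∃ g ∈ Ksub n, actFlag n g V = V'

/-- Vectors of the representative flags: for `i = j` this gives the flag `F_i`
`(e_1 ⊂ ⋯ ⊂ e_{i-1} ⊂ e_n ⊂ e_i ⊂ ⋯ ⊂ e_{n-1})` (`e_n` in position `i`), and for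
`i < j` the flag `F_{i,j}`
`(e_1 ⊂ ⋯ ⊂ e_{i-1} ⊂ e_i + e_n ⊂ e_{i+1} ⊂ ⋯ ⊂ e_{j-1} ⊂ e_n ⊂ e_j ⊂ ⋯ ⊂ e_{n-1})`. -/
def repVec (n i j m : ℕ) : Fin n → ℂ :=
  if m < i then stdVec n m
  else if m = i then (if i < j then stdVec n i else 0) + stdVec n n
  else if m < j then stdVec n m
  else if m = j then stdVec n n
  else stdVec n (m - 1)

/-- `repFlag n i i = F_i` and `repFlag n i j = F_{i,j}` for `i < j`. -/
def repFlag (n i j : ℕ) : ℕ → Submodule ℂ (Fin n → ℂ) := flagOf n (repVec n i j)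

lemma stdVec_apply (n m : ℕ) (hm : 1 ≤ m) (hmn : m ≤ n) (j : Fin n) :
    stdVec n m j = if (j : ℕ) + 1 = m then 1 else 0 := by
  unfold stdVec
  rw [dif_pos ⟨hm, hmn⟩, Pi.single_apply]
  congr 1
  rw [Fin.ext_iff]
  simp only [eq_iff_iff]
  omega

lemma stdSub_zero (n : ℕ) : stdSub n 0 = ⊥ := by simp [stdSub]

lemma stdSub_succ (n k : ℕ) : stdSub n (k + 1) = stdSub n k ⊔ span ℂ {stdVec n (k + 1)} := by
  unfold stdSub
  have : Set.Icc 1 (k + 1) = Set.Icc 1 k ∪ {k + 1} := by ext x; simp; omega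
  rw [this, Set.image_union, span_union, Set.image_singleton]

lemma flagOf_zero (n : ℕ) (v : ℕ → Fin n → ℂ) : flagOf n v 0 = ⊥ := by simp [flagOf]

lemma flagOf_succ (n : ℕ) (v : ℕ → Fin n → ℂ) (k : ℕ) (hk : k < n) :
    flagOf n v (k + 1) = flagOf n v k ⊔ span ℂ {v (k + 1)} := by
  unfold flagOf
  have : Set.Icc 1 (min (k + 1) n) = Set.Icc 1 (min k n) ∪ {k + 1} := by ext x; simp; omega
  rw [this, Set.image_union, span_union, Set.image_singleton]

lemma flagOf_ge (n : ℕ) (v : ℕ → Fin n → ℂ) (k : ℕ) (hk : n ≤ k) :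
    flagOf n v k = flagOf n v n := by
  unfold flagOf
  rw [min_eq_right hk, min_self]

lemma flagOf_eq_std (n : ℕ) (v : ℕ → Fin n → ℂ) (k : ℕ) (hk : k ≤ n)
    (h : ∀ m, m ≤ k → v m = stdVec n m) : flagOf n v k = stdSub n k := by
  unfold flagOf stdSub
  rw [min_eq_left hk]
  congr 1
  exact Set.image_congr fun m hm => h m hm.2

lemma mem_stdSub (n k : ℕ) (hk : k ≤ n) (x : Fin n → ℂ) :
    x ∈ stdSub n k ↔ ∀ j : Fin n, k ≤ (j : ℕ) → x j = 0 := by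
  induction k generalizing x with
  | zero =>
    rw [stdSub_zero, Submodule.mem_bot]
    simp [funext_iff]
  | succ k ih =>
    rw [stdSub_succ, Submodule.mem_sup]
    constructor
    · rintro ⟨y, hy, z, hz, rfl⟩ j hj
      rw [mem_span_singleton] at hz
      obtain ⟨c, rfl⟩ := hz
      have := (ih (by omega) y).1 hy j (by omega)
      rw [Pi.add_apply, this, Pi.smul_apply, stdVec_apply n _ (by omega) hk, if_neg (by omega)]
      simp
    · intro h
      refine ⟨x - x ⟨k, hk⟩ • stdVec n (k + 1), ?_, x ⟨k, hk⟩ • stdVec n (k + 1),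
        smul_mem _ _ (mem_span_singleton_self _), by simp⟩
      rw [ih (by omega)]
      intro j hj
      rw [Pi.sub_apply, Pi.smul_apply, stdVec_apply n _ (by omega) hk]
      by_cases hjk : (j : ℕ) = k
      · have : j = ⟨k, hk⟩ := Fin.ext hjk
        subst this
        simp
      · rw [if_neg (by omega), h j (by omega)]
        simp

lemma stdSub_top (n : ℕ) : stdSub n n = ⊤ := by
  rw [eq_top_iff]
  intro x _
  rw [mem_stdSub n n le_rfl]
  intro j hj
  exact absurd j.2 (by omega)

lemma flagOf_complete (n : ℕ) (v : ℕ → Fin n → ℂ) (h : flagOf n v n = ⊤) :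
    IsCompleteFlag n (flagOf n v) := by
  have hstep : ∀ k, k < n →
      finrank ℂ ↥(flagOf n v (k + 1)) ≤ finrank ℂ ↥(flagOf n v k) + 1 := by
    intro k hk
    rw [flagOf_succ n v k hk]
    refine (Submodule.finrank_add_le_finrank_add_finrank _ _).trans ?_
    have := (finrank_span_le_card (R := ℂ) ({v (k + 1)} : Set (Fin n → ℂ)))
    rw [Set.toFinset_singleton, Finset.card_singleton] at this
    omega
  have hle : ∀ k, k ≤ n → finrank ℂ ↥(flagOf n v k) ≤ k := by
    intro k
    induction k with
    | zero => intro _; rw [flagOf_zero]; simp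
    | succ k ih => intro hk; have := hstep k hk; have := ih (by omega); omega
  have hge : ∀ d, d ≤ n → n ≤ finrank ℂ ↥(flagOf n v (n - d)) + d := by
    intro d
    induction d with
    | zero => intro _; rw [Nat.sub_zero, h]; simp
    | succ d ih =>
      intro hd
      have h1 := hstep (n - (d + 1)) (by omega)
      have h2 := ih (by omega)
      rw [show n - (d + 1) + 1 = n - d by omega] at h1
      omega
  refine ⟨fun k hk => ?_, fun k => ?_, fun k hk => flagOf_ge n v k hk⟩
  · have h1 := hge (n - k) (by omega)
    have h2 := hle k hk
    rw [show n - (n - k) = k by omega] at h1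
    omega
  · unfold flagOf
    exact span_mono (Set.image_mono (Set.Icc_subset_Icc_right (by omega)))

lemma flagOf_tail (n : ℕ) (v : ℕ → Fin n → ℂ) (k0 : ℕ) (h0 : 1 ≤ k0)
    (hb : flagOf n v k0 = stdSub n (k0 - 1) ⊔ span ℂ {stdVec n n})
    (hv : ∀ m, k0 < m → v m = stdVec n (m - 1)) (k : ℕ) (hk : k0 ≤ k) (hkn : k ≤ n) :
    flagOf n v k = stdSub n (k - 1) ⊔ span ℂ {stdVec n n} := by
  induction k, hk using Nat.le_induction with
  | base => exact hb
  | succ k hk ih =>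
    rw [flagOf_succ n v k (by omega), ih (by omega), hv (k + 1) (by omega)]
    obtain ⟨q, rfl⟩ : ∃ q, k = q + 1 := ⟨k - 1, by omega⟩
    simp only [Nat.add_sub_cancel]
    rw [stdSub_succ, sup_right_comm]

lemma rep_ii_lt (n i k : ℕ) (hk : k < i) (hkn : k ≤ n) : repFlag n i i k = stdSub n k := by
  refine flagOf_eq_std n _ k hkn fun m hm => ?_
  unfold repVec
  rw [if_pos (by omega)]

lemma rep_ii_ge (n i k : ℕ) (hi : 1 ≤ i) (hk : i ≤ k) (hkn : k ≤ n) :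
    repFlag n i i k = stdSub n (k - 1) ⊔ span ℂ {stdVec n n} := by
  refine flagOf_tail n _ i hi ?_ ?_ k hk hkn
  · obtain ⟨q, rfl⟩ : ∃ q, i = q + 1 := ⟨i - 1, by omega⟩
    rw [flagOf_succ _ _ _ (by omega)]
    have := rep_ii_lt n (q + 1) q (by omega) (by omega)
    unfold repFlag at this
    rw [this]
    simp [repVec]
  · intro m hm
    unfold repVec
    rw [if_neg (by omega), if_neg (by omega), if_neg (by omega), if_neg (by omega)]

lemma rep_ij_lt (n i k : ℕ) (hk : k < i) (hkn : k ≤ n) :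
    repFlag n i (i + 1) k = stdSub n k := by
  refine flagOf_eq_std n _ k hkn fun m hm => ?_
  unfold repVec
  rw [if_pos (by omega)]

lemma rep_ij_eq (n p : ℕ) (hkn : p + 1 ≤ n) :
    repFlag n (p + 1) (p + 1 + 1) (p + 1) =
      stdSub n p ⊔ span ℂ {stdVec n (p + 1) + stdVec n n} := by
  have := rep_ij_lt n (p + 1) p (by omega) (by omega)
  unfold repFlag at this ⊢
  rw [flagOf_succ _ _ _ (by omega), this]
  simp [repVec]

lemma span_aux {E : Type*} [AddCommGroup E] [Module ℂ E] (a b : E) :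
    span ℂ {a + b} ⊔ span ℂ {b} = span ℂ {a} ⊔ span ℂ {b} := by
  apply le_antisymm
  · refine sup_le ?_ le_sup_right
    rw [span_singleton_le_iff_mem]
    exact add_mem (mem_sup_left (mem_span_singleton_self _))
      (mem_sup_right (mem_span_singleton_self _))
  · refine sup_le ?_ le_sup_right
    rw [span_singleton_le_iff_mem]
    have : a = (a + b) - b := by simp
    rw [this]
    exact sub_mem (mem_sup_left (by simp))
      (mem_sup_right (mem_span_singleton_self _))

lemma rep_ij_gt (n p k : ℕ) (hk : p + 1 < k) (hkn : k ≤ n) :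
    repFlag n (p + 1) (p + 1 + 1) k = stdSub n (k - 1) ⊔ span ℂ {stdVec n n} := by
  refine flagOf_tail n _ (p + 1 + 1) (by omega) ?_ ?_ k hk hkn
  · have := rep_ij_eq n p (by omega)
    unfold repFlag at this
    rw [flagOf_succ _ _ _ (by omega), this]
    simp only [Nat.add_sub_cancel]
    rw [stdSub_succ, sup_assoc, sup_assoc, ← span_aux (stdVec n (p + 1))]
    simp [repVec]
  · intro m hm
    unfold repVec
    rw [if_neg (by omega), if_neg (by omega), if_neg (by omega), if_neg (by omega)]

lemma top_aux (n : ℕ) (hn : 1 ≤ n) : stdSub n (n - 1) ⊔ span ℂ {stdVec n n} = ⊤ := by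
  obtain ⟨q, rfl⟩ : ∃ q, n = q + 1 := ⟨n - 1, by omega⟩
  simp only [Nat.add_sub_cancel]
  rw [← stdSub_succ, stdSub_top]

lemma repFlag_ge (n i j k : ℕ) (hk : n ≤ k) : repFlag n i j k = repFlag n i j n :=
  flagOf_ge n _ k hk

/-- Agreement of flags in degrees `≤ n` other than `i` extends to all degrees other than `i`. -/
lemma agree_ext (n i : ℕ) (hin : i < n) (X Y : ℕ → Submodule ℂ (Fin n → ℂ))
    (hX : ∀ k, n ≤ k → X k = X n) (hY : ∀ k, n ≤ k → Y k = Y n)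
    (h1 : ∀ k, k < i → X k = Y k) (h2 : ∀ k, i < k → k ≤ n → X k = Y k) :
    ∀ m, m ≠ i → X m = Y m := by
  intro m hm
  rcases le_or_gt m n with h | h
  · rcases lt_or_gt_of_ne hm with h' | h'
    · exact h1 m h'
    · exact h2 m h' h
  · rw [hX m h.le, hY m h.le]
    exact h2 n hin le_rfl

lemma agree1 (n p : ℕ) (hp : p + 1 < n) (m : ℕ) (hm : m ≠ p + 1) :
    repFlag n (p + 1 + 1) (p + 1 + 1) m = repFlag n (p + 1) (p + 1) m := by
  refine agree_ext n (p + 1) hp _ _ (repFlag_ge n _ _) (repFlag_ge n _ _) ?_ ?_ m hm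
  · intro k hk
    rw [rep_ii_lt _ _ _ (by omega) (by omega), rep_ii_lt _ _ _ (by omega) (by omega)]
  · intro k hk hkn
    rw [rep_ii_ge _ _ _ (by omega) (by omega) (by omega),
      rep_ii_ge _ _ _ (by omega) (by omega) (by omega)]

lemma agree2 (n p : ℕ) (hp : p + 1 < n) (m : ℕ) (hm : m ≠ p + 1) :
    repFlag n (p + 1) (p + 1 + 1) m = repFlag n (p + 1) (p + 1) m := by
  refine agree_ext n (p + 1) hp _ _ (repFlag_ge n _ _) (repFlag_ge n _ _) ?_ ?_ m hm
  · intro k hk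
    rw [rep_ij_lt _ _ _ (by omega) (by omega), rep_ii_lt _ _ _ (by omega) (by omega)]
  · intro k hk hkn
    rw [rep_ij_gt _ _ _ (by omega) (by omega),
      rep_ii_ge _ _ _ (by omega) (by omega) (by omega)]

/-- Scaling of the coordinate `p` by `c`. -/
def scaleEquiv (n p : ℕ) (c : ℂ) (hc : c ≠ 0) : (Fin n → ℂ) ≃ₗ[ℂ] (Fin n → ℂ) :=
  LinearEquiv.piCongrRight fun j =>
    LinearEquiv.smulOfNeZero ℂ ℂ (if (j : ℕ) = p then c else 1) (by split_ifs <;> simp [hc])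

lemma scaleEquiv_apply (n p : ℕ) (c : ℂ) (hc : c ≠ 0) (x : Fin n → ℂ) (j : Fin n) :
    scaleEquiv n p c hc x j = (if (j : ℕ) = p then c else 1) * x j := rfl

lemma scale_self (n p : ℕ) (hp : p + 1 ≤ n) (c : ℂ) (hc : c ≠ 0) :
    scaleEquiv n p c hc (stdVec n (p + 1)) = c • stdVec n (p + 1) := by
  ext j
  rw [scaleEquiv_apply, Pi.smul_apply, stdVec_apply _ _ (by omega) (by omega)]
  by_cases h : (j : ℕ) = p <;> simp [h]

lemma scale_last (n p : ℕ) (hp : p + 1 < n) (c : ℂ) (hc : c ≠ 0) :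
    scaleEquiv n p c hc (stdVec n n) = stdVec n n := by
  ext j
  rw [scaleEquiv_apply, stdVec_apply _ _ (by omega) (by omega)]
  by_cases h : (j : ℕ) = p
  · rw [if_neg (by omega : ¬ ((j : ℕ) + 1 = n))]; simp
  · simp [h]

lemma scale_map (n p : ℕ) (c : ℂ) (hc : c ≠ 0) (k : ℕ) (hk : k ≤ n) :
    Submodule.map (scaleEquiv n p c hc).toLinearMap (stdSub n k) = stdSub n k := by
  ext x
  constructor
  · rintro ⟨y, hy, rfl⟩
    rw [mem_stdSub n k hk]
    intro j hj
    have := (mem_stdSub n k hk y).1 hy j hj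
    change scaleEquiv n p c hc y j = 0
    rw [scaleEquiv_apply, this, mul_zero]
  · intro hx
    refine ⟨(scaleEquiv n p c hc).symm x, ?_, (scaleEquiv n p c hc).apply_symm_apply x⟩
    refine (mem_stdSub n k hk _).2 fun j hj => ?_
    have h1 := (mem_stdSub n k hk x).1 hx j hj
    have h2 := scaleEquiv_apply n p c hc ((scaleEquiv n p c hc).symm x) j
    rw [LinearEquiv.apply_symm_apply, h1] at h2
    rcases mul_eq_zero.1 h2.symm with h3 | h3
    · exact absurd h3 (by split_ifs; exacts [hc, one_ne_zero])
    · exact h3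

lemma en_not_mem (n k : ℕ) (hk : k < n) : stdVec n n ∉ stdSub n k := by
  intro h
  have := (mem_stdSub n k hk.le _).1 h ⟨n - 1, by omega⟩ (by simp; omega)
  rw [stdVec_apply _ _ (by omega) le_rfl, if_pos (by simp; omega)] at this
  exact one_ne_zero this

/-- Members of the orbit of `F_{i,i+1}` do not contain `e_n` in degree `i`. -/
lemma orbit_not_mem (n p : ℕ) (hp : p + 1 < n) (V : ℕ → Submodule ℂ (Fin n → ℂ))
    (h : InKOrbit n (repFlag n (p + 1) (p + 1 + 1)) V) : stdVec n n ∉ V (p + 1) := by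
  obtain ⟨g, ⟨hg1, -⟩, rfl⟩ := h
  rintro ⟨y, hy, hye⟩
  have hy' : y = stdVec n n := g.injective (hye.trans hg1.symm)
  subst hy'
  have hy2 : stdVec n n ∈ repFlag n (p + 1) (p + 1 + 1) (p + 1) := hy
  rw [rep_ij_eq n p (by omega), Submodule.mem_sup] at hy2
  obtain ⟨u, hu, z, hz, huz⟩ := hy2
  obtain ⟨c, rfl⟩ := mem_span_singleton.1 hz
  rw [mem_stdSub n p (by omega)] at hu
  have h1 := congrFun huz ⟨p, by omega⟩
  have h2 := congrFun huz ⟨n - 1, by omega⟩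
  have e1 : ¬ (p + 1 = n) := by omega
  have e2 : n - 1 + 1 = n := by omega
  have e3 : ¬ (n = p + 1) := by omega
  simp only [Pi.add_apply, Pi.smul_apply, hu ⟨p, by omega⟩ le_rfl,
    hu ⟨n - 1, by omega⟩ (show p ≤ n - 1 by omega),
    stdVec_apply n n (by omega) le_rfl, stdVec_apply n (p + 1) (by omega) (by omega),
    e1, e2, e3, if_true, if_false] at h1 h2
  simp at h1 h2
  rw [h1] at h2
  exact zero_ne_one h2

/-- Members of the orbit of `F_{i,i+1}` are not contained in `U_{n-1}` in degree `i`. -/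
lemma orbit_not_le (n p : ℕ) (hp : p + 1 < n) (V : ℕ → Submodule ℂ (Fin n → ℂ))
    (h : InKOrbit n (repFlag n (p + 1) (p + 1 + 1)) V) : ¬ V (p + 1) ≤ stdSub n (n - 1) := by
  obtain ⟨g, ⟨-, hg2⟩, rfl⟩ := h
  intro hle
  have h1 : Submodule.map g.toLinearMap (repFlag n (p + 1) (p + 1 + 1) (p + 1)) ≤
      Submodule.map g.toLinearMap (stdSub n (n - 1)) := by rw [hg2]; exact hle
  rw [Submodule.map_le_map_iff_of_injective g.injective, rep_ij_eq n p (by omega)] at h1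
  have h2 := h1 (mem_sup_right (mem_span_singleton_self _))
  have h3 := (mem_stdSub n (n - 1) (by omega) _).1 h2 ⟨n - 1, by omega⟩ le_rfl
  have e2 : n - 1 + 1 = n := by omega
  have e3 : ¬ (n = p + 1) := by omega
  simp only [Pi.add_apply, stdVec_apply n n (by omega) le_rfl,
    stdVec_apply n (p + 1) (by omega) (by omega), e2, e3, if_true, if_false] at h3
  simp at h3

lemma stdSub_mono (n : ℕ) {k l : ℕ} (h : k ≤ l) : stdSub n k ≤ stdSub n l :=
  span_mono (Set.image_mono (Set.Icc_subset_Icc_right h))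

lemma exists_gen (n p : ℕ) (hp : p + 1 < n) (V : ℕ → Submodule ℂ (Fin n → ℂ))
    (hV : IsCompleteFlag n V) (h : ∀ m, m ≠ p + 1 → V m = repFlag n (p + 1) (p + 1) m) :
    ∃ a b : ℂ, ¬ (a = 0 ∧ b = 0) ∧
      V (p + 1) = stdSub n p ⊔ span ℂ {a • stdVec n (p + 1) + b • stdVec n n} := by
  obtain ⟨hd, hmono, -⟩ := hV
  have hVp : V p = stdSub n p := by
    rw [h p (by omega), rep_ii_lt _ _ _ (by omega) (by omega)]
  have hVq : V (p + 1 + 1) = stdSub n (p + 1) ⊔ span ℂ {stdVec n n} := by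
    rw [h _ (by omega), rep_ii_ge _ _ _ (by omega) (by omega) (by omega)]
    simp
  have hle := hmono p
  have hdp := hd p (by omega)
  have hdi := hd (p + 1) (by omega)
  rw [hVp] at hle hdp
  have hnle : ¬ V (p + 1) ≤ stdSub n p := by
    intro hc
    have := Submodule.finrank_mono hc
    omega
  obtain ⟨v, hv, hvn⟩ := Set.not_subset.1 hnle
  have hv2 := hmono (p + 1) hv
  rw [hVq, stdSub_succ, sup_assoc, Submodule.mem_sup] at hv2
  obtain ⟨u, hu, z, hz, rfl⟩ := hv2
  obtain ⟨z1, hz1, z2, hz2, rfl⟩ := Submodule.mem_sup.1 hz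
  obtain ⟨a, rfl⟩ := mem_span_singleton.1 hz1
  obtain ⟨b, rfl⟩ := mem_span_singleton.1 hz2
  have hx : a • stdVec n (p + 1) + b • stdVec n n ∈ V (p + 1) := by
    have := sub_mem hv (hle hu)
    simpa using this
  have hxn : a • stdVec n (p + 1) + b • stdVec n n ∉ stdSub n p :=
    fun hc => hvn (add_mem hu hc)
  refine ⟨a, b, ?_, ?_⟩
  · rintro ⟨rfl, rfl⟩
    exact hxn (by simp)
  · symm
    apply Submodule.eq_of_le_of_finrank_le
    · exact sup_le hle ((span_singleton_le_iff_mem _ _).2 hx)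
    · have hlt : stdSub n p < stdSub n p ⊔ span ℂ {a • stdVec n (p + 1) + b • stdVec n n} := by
        refine lt_of_le_of_ne le_sup_left fun hc => hxn ?_
        rw [hc]
        exact mem_sup_right (mem_span_singleton_self _)
      have := Submodule.finrank_lt_finrank_of_lt hlt
      omega

lemma orbit_of_gen (n p : ℕ) (hp : p + 1 < n) (V : ℕ → Submodule ℂ (Fin n → ℂ))
    (h : ∀ m, m ≠ p + 1 → V m = repFlag n (p + 1) (p + 1) m) (c : ℂ) (hc : c ≠ 0)
    (hVi : V (p + 1) = stdSub n p ⊔ span ℂ {c • stdVec n (p + 1) + stdVec n n}) :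
    InKOrbit n (repFlag n (p + 1) (p + 1 + 1)) V := by
  refine ⟨scaleEquiv n p c hc, ⟨scale_last n p hp c hc, scale_map n p c hc _ (by omega)⟩, ?_⟩
  funext m
  by_cases hm : m = p + 1
  · subst hm
    unfold actFlag
    rw [hVi, rep_ij_eq n p (by omega), Submodule.map_sup, scale_map n p c hc _ (by omega),
      Submodule.map_span, Set.image_singleton]
    simp only [LinearEquiv.coe_coe, map_add]
    rw [scale_self n p (by omega), scale_last n p hp]
  · rw [h m hm]
    revert m
    refine agree_ext n (p + 1) hp _ _ ?_ (repFlag_ge n _ _) ?_ ?_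
    · intro k hk
      unfold actFlag repFlag
      rw [flagOf_ge n _ k hk]
    · intro k hk
      unfold actFlag
      rw [rep_ij_lt _ _ _ (by omega) (by omega), rep_ii_lt _ _ _ (by omega) (by omega),
        scale_map n p c hc _ (by omega)]
    · intro k hk hkn
      unfold actFlag
      rw [rep_ij_gt _ _ _ (by omega) (by omega),
        rep_ii_ge _ _ _ (by omega) (by omega) (by omega), Submodule.map_sup,
        scale_map n p c hc _ (by omega), Submodule.map_span, Set.image_singleton]
      simp only [LinearEquiv.coe_coe]
      rw [scale_last n p hp]

/-- If a complete flag agrees with `F_i` in every degree `m ≠ i` (`1 ≤ i ≤ n-1`), then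
exactly one of the following holds: it equals `F_i`; it equals `F_{i+1}`; it lies in the
`K`-orbit of `F_{i,i+1}`; moreover each possibility occurs (the root `α_i` is noncompact
for `Q_i` and `m(s_{α_i}) * Q_i = Q_{i,i+1}`). -/
theorem stmt_14 (n : ℕ) (hn : 2 ≤ n) (i : ℕ) (hi1 : 1 ≤ i) (hin : i ≤ n - 1) :
    (∀ V : ℕ → Submodule ℂ (Fin n → ℂ), IsCompleteFlag n V →
      (∀ m, m ≠ i → V m = repFlag n i i m) →
      (V = repFlag n i i ∧ V ≠ repFlag n (i + 1) (i + 1) ∧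
          ¬ InKOrbit n (repFlag n i (i + 1)) V) ∨
        (V ≠ repFlag n i i ∧ V = repFlag n (i + 1) (i + 1) ∧
          ¬ InKOrbit n (repFlag n i (i + 1)) V) ∨
        (V ≠ repFlag n i i ∧ V ≠ repFlag n (i + 1) (i + 1) ∧
          InKOrbit n (repFlag n i (i + 1)) V)) ∧
    (∃ V, IsCompleteFlag n V ∧ (∀ m, m ≠ i → V m = repFlag n i i m) ∧
      V = repFlag n i i) ∧
    (∃ V, IsCompleteFlag n V ∧ (∀ m, m ≠ i → V m = repFlag n i i m) ∧
      V = repFlag n (i + 1) (i + 1)) ∧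
    (∃ V, IsCompleteFlag n V ∧ (∀ m, m ≠ i → V m = repFlag n i i m) ∧
      InKOrbit n (repFlag n i (i + 1)) V) := by
  obtain ⟨p, rfl⟩ : ∃ p, i = p + 1 := ⟨i - 1, by omega⟩
  have hp : p + 1 < n := by omega
  have hFi : repFlag n (p + 1) (p + 1) (p + 1) = stdSub n p ⊔ span ℂ {stdVec n n} :=
    rep_ii_ge n (p + 1) (p + 1) (by omega) le_rfl (by omega)
  have hFj : repFlag n (p + 1 + 1) (p + 1 + 1) (p + 1) = stdSub n (p + 1) :=
    rep_ii_lt n (p + 1 + 1) (p + 1) (by omega) (by omega)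
  have hmem : stdVec n n ∈ repFlag n (p + 1) (p + 1) (p + 1) := by
    rw [hFi]
    exact mem_sup_right (mem_span_singleton_self _)
  have hFle : repFlag n (p + 1 + 1) (p + 1 + 1) (p + 1) ≤ stdSub n (n - 1) := by
    rw [hFj]
    exact stdSub_mono n (by omega)
  have hne : repFlag n (p + 1) (p + 1) ≠ repFlag n (p + 1 + 1) (p + 1 + 1) := by
    intro hc
    rw [hc, hFj] at hmem
    exact en_not_mem n (p + 1) hp hmem
  refine ⟨?_, ?_, ?_, ?_⟩
  · intro V hV h
    obtain ⟨a, b, hab, hVi⟩ := exists_gen n p hp V hV h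
    by_cases ha : a = 0
    · left
      have hb : b ≠ 0 := fun hb => hab ⟨ha, hb⟩
      have hVF : V = repFlag n (p + 1) (p + 1) := by
        funext m
        by_cases hm : m = p + 1
        · subst hm
          rw [hVi, hFi, ha, zero_smul, zero_add, span_singleton_smul_eq (IsUnit.mk0 b hb)]
        · exact h m hm
      subst hVF
      exact ⟨rfl, hne, fun ho => orbit_not_mem n p hp _ ho hmem⟩
    by_cases hb : b = 0
    · right; left
      have hVF : V = repFlag n (p + 1 + 1) (p + 1 + 1) := by
        funext m
        by_cases hm : m = p + 1
        · subst hm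
          rw [hVi, hFj, hb, zero_smul, add_zero, span_singleton_smul_eq (IsUnit.mk0 a ha),
            stdSub_succ]
        · rw [agree1 n p hp m hm]
          exact h m hm
      subst hVF
      exact ⟨hne.symm, rfl, fun ho => orbit_not_le n p hp _ ho hFle⟩
    · right; right
      have ho : InKOrbit n (repFlag n (p + 1) (p + 1 + 1)) V := by
        refine orbit_of_gen n p hp V h (b⁻¹ * a) (mul_ne_zero (inv_ne_zero hb) ha) ?_
        rw [hVi, ← span_singleton_smul_eq (IsUnit.mk0 b hb)
          ((b⁻¹ * a) • stdVec n (p + 1) + stdVec n n), smul_add, smul_smul,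
          mul_inv_cancel_left₀ hb]
      refine ⟨?_, ?_, ho⟩
      · rintro rfl
        exact orbit_not_mem n p hp _ ho hmem
      · rintro rfl
        exact orbit_not_le n p hp _ ho hFle
  · refine ⟨_, flagOf_complete n _ ?_, fun m _ => rfl, rfl⟩
    exact (rep_ii_ge n (p + 1) n (by omega) (by omega) le_rfl).trans (top_aux n (by omega))
  · refine ⟨_, flagOf_complete n _ ?_, fun m hm => agree1 n p hp m hm, rfl⟩
    exact (rep_ii_ge n (p + 1 + 1) n (by omega) (by omega) le_rfl).trans (top_aux n (by omega))
  · refine ⟨repFlag n (p + 1) (p + 1 + 1), flagOf_complete n _ ?_,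
      fun m hm => agree2 n p hp m hm, ?_⟩
    · exact (rep_ij_gt n p n (by omega) le_rfl).trans (top_aux n (by omega))
    · refine orbit_of_gen n p hp _ (fun m hm => agree2 n p hp m hm) 1 one_ne_zero ?_
      rw [one_smul]
      exact rep_ij_eq n p (by omega)
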